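/- Let R be any ring and let C be a wide subcategory of left R-modules that is closed under arbitrary direct sums. Then gf(C) = C, where f(C) is the localizing subcategory of D(R) consisting of all objects X (not necessarily small) with H_n X ∈ C for all n ∈ ℤ, and g(D) is the smallest wide subcategory closed under arbitrary direct sums containing all homology modules H_n X for X ∈ D. -/

import Mathlib

open CategoryTheory CategoryTheory.Limits CategoryTheory.Pretriangulated ZeroObject

universe w u u₁ v₁

/-- A full subcategory (given as a set of objects) of an abelian category is *wide*
if it is closed under isomorphisms, kernels, cokernels and extensions. -/
structure IsWideSubcategory {A : Type*} [Category A] [Abelian A] (C : Set A) : Prop where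
  mem_of_iso : ∀ {X Y : A}, (X ≅ Y) → X ∈ C → Y ∈ C
  kernel_mem : ∀ {X Y : A} (f : X ⟶ Y), X ∈ C → Y ∈ C → kernel f ∈ C
  cokernel_mem : ∀ {X Y : A} (f : X ⟶ Y), X ∈ C → Y ∈ C → cokernel f ∈ C
  extension_mem : ∀ (S : CategoryTheory.ShortComplex A), S.ShortExact →
    S.X₁ ∈ C → S.X₃ ∈ C → S.X₂ ∈ C

/-- The wide subcategory generated by a set of objects: the intersection of all
wide subcategories containing it. -/
def wideClosure {A : Type*} [Category A] [Abelian A] (S : Set A) : Set A :=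
  ⋂₀ {C : Set A | IsWideSubcategory C ∧ S ⊆ C}

/-- `C₀`, the wide subcategory of `R`-modules generated by the module `R`. -/
def wideSubcatGenByRing (R : Type u) [Ring R] : Set (ModuleCat.{u} R) :=
  wideClosure {ModuleCat.of R R}

/-- A thick subcategory of a (pre)triangulated category: a full triangulated
subcategory closed under retracts (direct summands). -/
structure IsThickSubcategory {T : Type*} [Category T] [HasZeroObject T] [Preadditive T]
    [HasShift T ℤ] [∀ n : ℤ, (shiftFunctor T n).Additive] [Pretriangulated T]
    (D : Set T) : Prop where
  mem_of_iso : ∀ {X Y : T}, (X ≅ Y) → X ∈ D → Y ∈ D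
  zero_mem : (0 : T) ∈ D
  shift_mem : ∀ (X : T) (n : ℤ), X ∈ D → X⟦n⟧ ∈ D
  ext₂ : ∀ (T' : Triangle T), T' ∈ (distTriang T) → T'.obj₁ ∈ D → T'.obj₃ ∈ D → T'.obj₂ ∈ D
  retract_mem : ∀ (X Y : T) (i : X ⟶ Y) (r : Y ⟶ X), i ≫ r = 𝟙 X → Y ∈ D → X ∈ D

/-- An object of the derived category of `R`-modules is *small* if it belongs to every
thick subcategory containing the complex `S⁰R` (`R` concentrated in degree `0`), i.e. to
the thick subcategory generated by `S⁰R`; equivalently, `Hom(X,-)` commutes with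
arbitrary direct sums. -/
def IsSmallObject {R : Type u} [Ring R] [HasDerivedCategory.{w} (ModuleCat.{u} R)]
    (X : DerivedCategory (ModuleCat.{u} R)) : Prop :=
  ∀ D : Set (DerivedCategory (ModuleCat.{u} R)), IsThickSubcategory D →
    (DerivedCategory.singleFunctor (ModuleCat.{u} R) 0).obj (ModuleCat.of R R) ∈ D → X ∈ D

/-- A collection of objects is closed under arbitrary direct sums (coproducts) if the
vertex of any coproduct cocone on a family of its members again belongs to it. -/
def ClosedUnderDirectSums {T : Type u₁} [Category.{v₁} T] (D : Set T) : Prop :=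
  ∀ {ι : Type u} (X : ι → T) (c : Cofan X), IsColimit c → (∀ i, X i ∈ D) → c.pt ∈ D

/-- The smallest wide subcategory closed under arbitrary direct sums containing a given
set of objects. -/
def wideCoprodClosure {R : Type u} [Ring R] (S : Set (ModuleCat.{u} R)) :
    Set (ModuleCat.{u} R) :=
  ⋂₀ {C : Set (ModuleCat.{u} R) |
    IsWideSubcategory C ∧ ClosedUnderDirectSums.{u} C ∧ S ⊆ C}

/-- The map `f` on wide subcategories closed under direct sums: it sends `C` to the
collection of all objects `X` of the derived category (not necessarily small) with
`Hₙ X ∈ C` for all `n`. -/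
def fBig {R : Type u} [Ring R] [HasDerivedCategory.{w} (ModuleCat.{u} R)]
    (C : Set (ModuleCat.{u} R)) : Set (DerivedCategory (ModuleCat.{u} R)) :=
  {X | ∀ n : ℤ, (DerivedCategory.homologyFunctor (ModuleCat.{u} R) n).obj X ∈ C}

/-- The map `g` on localizing subcategories: it sends `D` to the smallest wide
subcategory closed under arbitrary direct sums containing all the homology modules
`Hₙ X` for `X ∈ D`. -/
def gBig {R : Type u} [Ring R] [HasDerivedCategory.{w} (ModuleCat.{u} R)]
    (D : Set (DerivedCategory (ModuleCat.{u} R))) : Set (ModuleCat.{u} R) :=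
  wideCoprodClosure {M | ∃ X ∈ D, ∃ n : ℤ,
    Nonempty ((DerivedCategory.homologyFunctor (ModuleCat.{u} R) n).obj X ≅ M)}

/-!
A distinguished triangle gives a long exact homology sequence, and in a five-term exact sequence
whose four outer terms lie in a wide subcategory the middle term is an extension of a kernel by a
cokernel; so `f(C)` is thick. Exactness of coproducts makes homology of complexes commute with
coproducts, hence coproducts of quasi-isomorphisms are quasi-isomorphisms. Representing morphisms
by right fractions, `Q : C(A) ⥤ D(A)` therefore sends a coproduct to a weak coproduct. It is an
actual coproduct: if `θ` kills all coprojections, these lift along the third side `z` of a triangle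
on `θ`, and the induced `ψ` makes `ψ ≫ z` an isomorphism, being the identity on homology; as
`z ≫ θ = 0`, also `θ = 0`. So homology on `D(A)` preserves coproducts, and `f(C)` is localizing.
Finally each `M ∈ C` is the homology of its stalk complex, whence `g(f(C)) = C`.
-/

section HomologyOfColimits

variable {J : Type*} [Category J] {A : Type u₁} [Category.{v₁} A] [Abelian A]
  [HasColimitsOfShape J A]

/-- The coprojections `F.obj j ⟶ colim F`, as a natural transformation in the diagram `F`. -/
noncomputable def evaluationToColim (j : J) : (evaluation J A).obj j ⟶ colim where
  app F := colimit.ι F j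

/-- The termwise colimit cocone of a short complex of diagrams, regarded as a diagram of short
complexes. -/
noncomputable def shortComplexColimCocone (S : ShortComplex (J ⥤ A)) :
    Cocone ((ShortComplex.functorEquivalence J A).functor.obj S) where
  pt := S.map colim
  ι.app j := S.mapNatTrans (evaluationToColim j)
  ι.naturality i j f := by
    ext
    · exact (colimit.w S.X₁ f).trans (Category.comp_id _).symm
    · exact (colimit.w S.X₂ f).trans (Category.comp_id _).symm
    · exact (colimit.w S.X₃ f).trans (Category.comp_id _).symm

noncomputable def isColimitShortComplexColimCocone (S : ShortComplex (J ⥤ A)) :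
    IsColimit (shortComplexColimCocone S) :=
  ShortComplex.isColimitOfIsColimitπ _ (colimit.isColimit S.X₁) (colimit.isColimit S.X₂)
    (colimit.isColimit S.X₃)

/-- The homology of a short complex of diagrams is computed pointwise. -/
noncomputable def functorEquivalenceCompHomologyIso (S : ShortComplex (J ⥤ A)) :
    (ShortComplex.functorEquivalence J A).functor.obj S ⋙ ShortComplex.homologyFunctor A ≅
      S.homology :=
  NatIso.ofComponents (fun j ↦ S.mapHomologyIso ((evaluation J A).obj j)) fun f ↦
    ((Iso.eq_inv_comp _).1 (NatTrans.app_homology ((evaluation J A).map f) S)).symm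

instance {κ : Type*} (c : ComplexShape κ) (n : κ) :
    PreservesColimitsOfShape J (HomologicalComplex.shortComplexFunctor A c n) where
  preservesColimit := ⟨fun h ↦ ⟨ShortComplex.isColimitOfIsColimitπ _
    (isColimitOfPreserves (HomologicalComplex.eval A c (c.prev n)) h)
    (isColimitOfPreserves (HomologicalComplex.eval A c n) h)
    (isColimitOfPreserves (HomologicalComplex.eval A c (c.next n)) h)⟩⟩

variable [HasExactColimitsOfShape J A]

lemma preservesColimit_homologyFunctor_functorEquivalence_obj (S : ShortComplex (J ⥤ A)) :
    PreservesColimit ((ShortComplex.functorEquivalence J A).functor.obj S)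
      (ShortComplex.homologyFunctor A) := by
  refine preservesColimit_of_preserves_colimit_cocone (isColimitShortComplexColimCocone S)
    (IsColimit.ofIsoColimit
      ((IsColimit.precomposeHomEquiv (functorEquivalenceCompHomologyIso S) _).symm
        (colimit.isColimit S.homology))
      (Cocone.ext (S.mapHomologyIso colim).symm fun j ↦ ?_))
  have hι : colimit.ι S.homology j = _ := NatTrans.app_homology (evaluationToColim (A := A) j) S
  change ((S.mapHomologyIso ((evaluation J A).obj j)).hom ≫ colimit.ι S.homology j) ≫
    (S.mapHomologyIso colim).inv = ShortComplex.homologyMap (S.mapNatTrans (evaluationToColim j))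
  simp [hι]

instance : PreservesColimitsOfShape J (ShortComplex.homologyFunctor A) where
  preservesColimit {F} :=
    have := preservesColimit_homologyFunctor_functorEquivalence_obj
      ((ShortComplex.functorEquivalence J A).inverse.obj F)
    preservesColimit_of_iso_diagram (K₁ := (ShortComplex.functorEquivalence J A).functor.obj _)
      _ ((ShortComplex.functorEquivalence J A).counitIso.app F)

instance {κ : Type*} (c : ComplexShape κ) (n : κ) :
    PreservesColimitsOfShape J (HomologicalComplex.homologyFunctor A c n) :=
  preservesColimitsOfShape_of_natIso (HomologicalComplex.homologyFunctorIso A c n).symm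

instance {κ : Type*} (c : ComplexShape κ) :
    (HomologicalComplex.quasiIso A c).IsStableUnderColimitsOfShape J where
  condition X₁ X₂ c₁ c₂ h₁ h₂ f hf φ hφ := by
    rw [HomologicalComplex.mem_quasiIso_iff, quasiIso_iff]
    intro n
    rw [quasiIsoAt_iff_isIso_homologyMap]
    let H := HomologicalComplex.homologyFunctor A c n
    refine MorphismProperty.IsStableUnderColimitsOfShape.condition
      (W := MorphismProperty.isomorphisms A) _ _ _ _ (isColimitOfPreserves H h₁)
      (isColimitOfPreserves H h₂) (Functor.whiskerRight f H) (fun j ↦ ?_) (H.map φ) fun j ↦ ?_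
    · have : QuasiIso (f.app j) := hf j
      exact inferInstanceAs (IsIso (HomologicalComplex.homologyMap (f.app j) n))
    · exact (H.map_comp _ _).symm.trans ((congrArg H.map (hφ j)).trans (H.map_comp _ _))

end HomologyOfColimits

section DerivedCoproducts

open DerivedCategory

lemma preservesColimitsOfShape_discrete_of_essSurj_comp {J C D E : Type*} [Category C]
    [Category D] [Category E] (L : C ⥤ D) (H : D ⥤ E) [L.EssSurj]
    [HasColimitsOfShape (Discrete J) C] [PreservesColimitsOfShape (Discrete J) L]
    [PreservesColimitsOfShape (Discrete J) (L ⋙ H)] :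
    PreservesColimitsOfShape (Discrete J) H := by
  suffices ∀ X : J → D, PreservesColimit (Discrete.functor X) H from
    preservesColimitsOfShape_of_discrete H
  intro X
  let K : Discrete J ⥤ C := Discrete.functor fun j ↦ L.objPreimage (X j)
  have : PreservesColimit (K ⋙ L) H :=
    preservesColimit_of_preserves_colimit_cocone (isColimitOfPreserves L (colimit.isColimit K))
      (isColimitOfPreserves (L ⋙ H) (colimit.isColimit K))
  exact preservesColimit_of_iso_diagram H
    (Discrete.natIso fun j ↦ L.objObjPreimageIso (X j.as) : K ⋙ L ≅ Discrete.functor X)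

variable {A : Type u₁} [Category.{v₁} A] [Abelian A] [HasDerivedCategory.{w} A]
  {ι : Type*} [HasColimitsOfShape (Discrete ι) A] [HasExactColimitsOfShape (Discrete ι) A]

lemma exists_desc_Q_coproduct (K : ι → CochainComplex A ℤ) {Y : DerivedCategory A}
    (f : ∀ i, Q.obj (K i) ⟶ Y) :
    ∃ ψ : Q.obj (∐ K) ⟶ Y, ∀ i, Q.map (Sigma.ι K i) ≫ ψ = f i := by
  choose K' s hs g hg using fun i ↦ right_fac (f i ≫ (Q.objObjPreimageIso Y).inv)
  have : QuasiIso (Limits.Sigma.map s) :=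
    MorphismProperty.colimMap (W := HomologicalComplex.quasiIso A _) _
      fun i ↦ (isIso_Q_map_iff_quasiIso A (s i.as)).1 (hs i.as)
  refine ⟨inv (Q.map (Limits.Sigma.map s)) ≫ Q.map (Sigma.desc g) ≫
    (Q.objObjPreimageIso Y).hom, fun i ↦ ?_⟩
  have hι : Q.map (Sigma.ι K i) ≫ inv (Q.map (Limits.Sigma.map s)) =
      inv (Q.map (s i)) ≫ Q.map (Sigma.ι K' i) := by
    rw [IsIso.comp_inv_eq, Category.assoc, IsIso.eq_inv_comp, ← Q.map_comp, ← Q.map_comp,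
      Sigma.ι_map]
  rw [reassoc_of% hι, ← Q.map_comp_assoc, Sigma.ι_desc, ← reassoc_of% (hg i), Iso.inv_hom_id,
    Category.comp_id]

instance (n : ℤ) : PreservesColimitsOfShape (Discrete ι) (Q (C := A) ⋙ homologyFunctor A n) :=
  preservesColimitsOfShape_of_natIso (homologyFunctorFactors A n).symm

lemma isIso_of_Q_ι_comp_eq (K : ι → CochainComplex A ℤ) (e : Q.obj (∐ K) ⟶ Q.obj (∐ K))
    (he : ∀ i, Q.map (Sigma.ι K i) ≫ e = Q.map (Sigma.ι K i)) : IsIso e := by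
  rw [DerivedCategory.isIso_iff]
  intro n
  let H := homologyFunctor A n
  suffices H.map e = 𝟙 _ by
    rw [this]
    infer_instance
  refine (isColimitOfPreserves (Q ⋙ H) (coproductIsCoproduct K)).hom_ext fun i ↦ ?_
  exact ((H.map_comp _ _).symm.trans (congrArg H.map (he i.as))).trans (Category.comp_id _).symm

lemma eq_zero_of_Q_ι_comp_eq_zero (K : ι → CochainComplex A ℤ) {Y : DerivedCategory A}
    (θ : Q.obj (∐ K) ⟶ Y) (hθ : ∀ i, Q.map (Sigma.ι K i) ≫ θ = 0) : θ = 0 := by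
  obtain ⟨Z, z, δ, hT⟩ := distinguished_cocone_triangle₁ θ
  have exists_lift (i : ι) : ∃ l : Q.obj (K i) ⟶ Z, Q.map (Sigma.ι K i) = l ≫ z :=
    Triangle.coyoneda_exact₂ _ hT _ (hθ i)
  choose l hl using exists_lift
  obtain ⟨ψ, hψ⟩ := exists_desc_Q_coproduct K l
  have : IsIso (ψ ≫ z) := isIso_of_Q_ι_comp_eq K _ fun i ↦ by rw [reassoc_of% (hψ i), hl]
  have hz : z ≫ θ = 0 := comp_distTriang_mor_zero₁₂ _ hT
  rw [← cancel_epi (ψ ≫ z), Category.assoc, hz, comp_zero, comp_zero]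

lemma preservesColimit_functor_Q (K : ι → CochainComplex A ℤ) :
    PreservesColimit (Discrete.functor K) (Q (C := A)) := by
  choose desc hdesc using fun Y ↦ exists_desc_Q_coproduct K (Y := Y)
  refine preservesColimit_of_preserves_colimit_cocone (coproductIsCoproduct K)
    ((isColimitMapCoconeCofanMkEquiv Q K (Sigma.ι K)).symm (Cofan.IsColimit.mk _
      (fun s ↦ desc _ s.inj) (fun s ↦ hdesc _ s.inj) fun s m hm ↦ ?_))
  refine sub_eq_zero.1 (eq_zero_of_Q_ι_comp_eq_zero K _ fun i ↦ ?_)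
  rw [Preadditive.comp_sub, hdesc, sub_eq_zero]
  exact hm i

instance : PreservesColimitsOfShape (Discrete ι) (Q (C := A)) :=
  have := preservesColimit_functor_Q (A := A) (ι := ι)
  preservesColimitsOfShape_of_discrete _

instance (n : ℤ) : PreservesColimitsOfShape (Discrete ι) (homologyFunctor A n) :=
  preservesColimitsOfShape_discrete_of_essSurj_comp Q _

end DerivedCoproducts

lemma ClosedUnderDirectSums.mem_of_isInitial {T : Type u₁} [Category.{v₁} T] {D : Set T}
    (hD : ClosedUnderDirectSums.{u} D) {X : T} (hX : IsInitial X) : X ∈ D :=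
  hD (PEmpty.elim : PEmpty → T) (Cofan.mk X fun i ↦ i.elim)
    (Cofan.IsColimit.mk _ (fun s ↦ hX.to s.pt) (fun _ i ↦ i.elim) fun _ _ _ ↦ hX.hom_ext _ _)
    fun i ↦ i.elim

section WideSubcategories

variable {A : Type u₁} [Category.{v₁} A] [Abelian A]

def isLimitKernelForkOfRetract {X Y : A} (h : Retract X Y) :
    IsLimit (KernelFork.ofι (f := 𝟙 Y - h.r ≫ h.i) h.i (by simp)) :=
  KernelFork.IsLimit.ofι' _ _ fun k hk ↦ ⟨k ≫ h.r, by simpa [sub_eq_zero, @eq_comm _ k] using hk⟩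

section FiveTerm

variable {X₀ X₁ X₂ X₃ X₄ : A} {a : X₀ ⟶ X₁} {b : X₁ ⟶ X₂} {c : X₂ ⟶ X₃} {d : X₃ ⟶ X₄}
  {wab : a ≫ b = 0} {wbc : b ≫ c = 0} {wcd : c ≫ d = 0}

lemma shortExact_cokernelDesc_kernelLift (hab : (ShortComplex.mk a b wab).Exact)
    (hbc : (ShortComplex.mk b c wbc).Exact) (hcd : (ShortComplex.mk c d wcd).Exact) :
    (ShortComplex.mk (cokernel.desc a b wab) (kernel.lift d c wcd)
      (by ext; simp [wbc])).ShortExact where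
  mono_f := hab.mono_cokernelDesc
  epi_g := hcd.epi_kernelLift
  exact := by
    have hdesc : (ShortComplex.mk (cokernel.desc a b wab) c (by ext; simp [wbc])).Exact :=
      (ShortComplex.exact_iff_of_epi_of_isIso_of_mono (S₁ := .mk b c wbc)
        (S₂ := .mk (cokernel.desc a b wab) c (by ext; simp [wbc]))
        { τ₁ := cokernel.π a, τ₂ := 𝟙 _, τ₃ := 𝟙 _ }).1 hbc
    exact (ShortComplex.exact_iff_of_epi_of_isIso_of_mono
      (S₁ := .mk (cokernel.desc a b wab) (kernel.lift d c wcd) (by ext; simp [wbc]))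
      (S₂ := .mk (cokernel.desc a b wab) c (by ext; simp [wbc]))
      { τ₁ := 𝟙 _, τ₂ := 𝟙 _, τ₃ := kernel.ι d }).2 hdesc

lemma IsWideSubcategory.mem_of_exact {C : Set A} (hC : IsWideSubcategory C)
    (hab : (ShortComplex.mk a b wab).Exact) (hbc : (ShortComplex.mk b c wbc).Exact)
    (hcd : (ShortComplex.mk c d wcd).Exact) (h₀ : X₀ ∈ C) (h₁ : X₁ ∈ C) (h₃ : X₃ ∈ C)
    (h₄ : X₄ ∈ C) : X₂ ∈ C :=
  hC.extension_mem _ (shortExact_cokernelDesc_kernelLift hab hbc hcd) (hC.cokernel_mem a h₀ h₁)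
    (hC.kernel_mem d h₃ h₄)

end FiveTerm

namespace IsWideSubcategory

variable {C : Set A} (hC : IsWideSubcategory C)

include hC

lemma mem_of_retract {X Y : A} (h : Retract X Y) (hY : Y ∈ C) : X ∈ C :=
  hC.mem_of_iso ((kernelIsKernel (𝟙 Y - h.r ≫ h.i)).conePointUniqueUpToIso
    (isLimitKernelForkOfRetract h)) (hC.kernel_mem _ hY hY)

lemma mem_of_isZero (hne : C.Nonempty) {X : A} (hX : IsZero X) : X ∈ C :=
  have ⟨M, hM⟩ := hne
  hC.mem_of_iso ((isZero_kernel_of_mono (𝟙 M)).iso hX) (hC.kernel_mem (𝟙 M) hM hM)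

end IsWideSubcategory

/-- The smallest wide subcategory closed under `u`-small direct sums containing `S`, in an
arbitrary abelian category. -/
def wideDirectSumClosure (S : Set A) : Set A :=
  ⋂₀ {C : Set A | IsWideSubcategory C ∧ ClosedUnderDirectSums.{u} C ∧ S ⊆ C}

lemma wideDirectSumClosure_subset {S C : Set A} (hC : IsWideSubcategory C)
    (hC' : ClosedUnderDirectSums.{u} C) (hS : S ⊆ C) : wideDirectSumClosure.{u} S ⊆ C :=
  Set.sInter_subset_of_mem ⟨hC, hC', hS⟩

lemma subset_wideDirectSumClosure (S : Set A) : S ⊆ wideDirectSumClosure.{u} S :=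
  Set.subset_sInter fun _ hC ↦ hC.2.2

end WideSubcategories

section Homology

open DerivedCategory

variable {A : Type u₁} [Category.{v₁} A] [Abelian A] [HasDerivedCategory.{w} A]

/-- The class `f(C)` of objects of the derived category all of whose homology lies in `C`. -/
def objectsWithHomologyIn (C : Set A) : Set (DerivedCategory A) :=
  {X | ∀ n : ℤ, (homologyFunctor A n).obj X ∈ C}

/-- The homology objects of the members of `D`, closed under isomorphism. -/
def homologyObjects (D : Set (DerivedCategory A)) : Set A :=
  {M | ∃ X ∈ D, ∃ n : ℤ, Nonempty ((homologyFunctor A n).obj X ≅ M)}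

lemma closedUnderDirectSums_objectsWithHomologyIn [HasCoproducts.{u} A] [AB4OfSize.{u} A]
    {C : Set A} (hC : ClosedUnderDirectSums.{u} C) :
    ClosedUnderDirectSums.{u} (objectsWithHomologyIn C) := fun X c hc hX n ↦
  hC _ (Cofan.mk _ fun i ↦ (homologyFunctor A n).map (c.inj i))
    (Cofan.isColimitMapCoconeEquiv _ X c (isColimitOfPreserves (homologyFunctor A n) hc))
    fun i ↦ hX i n

namespace IsWideSubcategory

variable {C : Set A} (hC : IsWideSubcategory C)

include hC

lemma objectsWithHomologyIn_of_distTriang {T : Triangle (DerivedCategory A)}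
    (hT : T ∈ distTriang (DerivedCategory A)) (h₁ : T.obj₁ ∈ objectsWithHomologyIn C)
    (h₃ : T.obj₃ ∈ objectsWithHomologyIn C) : T.obj₂ ∈ objectsWithHomologyIn C := fun n ↦
  hC.mem_of_exact (HomologySequence.exact₁ T hT (n - 1) n) (HomologySequence.exact₂ T hT n)
    (HomologySequence.exact₃ T hT n (n + 1)) (h₃ _) (h₁ _) (h₃ _) (h₁ _)

lemma isThickSubcategory_objectsWithHomologyIn (hne : C.Nonempty) :
    IsThickSubcategory (objectsWithHomologyIn C) where
  mem_of_iso e hX n := hC.mem_of_iso ((homologyFunctor A n).mapIso e) (hX n)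
  zero_mem n := hC.mem_of_isZero hne ((homologyFunctor A n).map_isZero (isZero_zero _))
  shift_mem X a hX n :=
    hC.mem_of_iso (((homologyFunctor A 0).shiftIso a n (a + n) rfl).app X).symm (hX (a + n))
  ext₂ _ hT h₁ h₃ := hC.objectsWithHomologyIn_of_distTriang hT h₁ h₃
  retract_mem _ _ i r hir hY n :=
    hC.mem_of_retract (Retract.map ⟨i, r, hir⟩ (homologyFunctor A n)) (hY n)

lemma singleFunctor_obj_mem_objectsWithHomologyIn {M : A} (hM : M ∈ C) :
    (singleFunctor A 0).obj M ∈ objectsWithHomologyIn C := by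
  intro n
  obtain hn | rfl | hn := lt_trichotomy n 0
  · exact hC.mem_of_isZero ⟨M, hM⟩ (isZero_of_isGE _ 0 n hn)
  · exact hC.mem_of_iso ((singleFunctorCompHomologyFunctorIso A 0).app M).symm hM
  · exact hC.mem_of_isZero ⟨M, hM⟩ (isZero_of_isLE _ 0 n hn)

lemma homologyObjects_objectsWithHomologyIn :
    homologyObjects (objectsWithHomologyIn C) = C := by
  refine Set.Subset.antisymm ?_ fun M hM ↦ ?_
  · rintro M ⟨X, hX, n, ⟨e⟩⟩
    exact hC.mem_of_iso e (hX n)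
  · exact ⟨_, hC.singleFunctor_obj_mem_objectsWithHomologyIn hM, 0,
      ⟨(singleFunctorCompHomologyFunctorIso A 0).app M⟩⟩

end IsWideSubcategory

theorem gf_eq_self_of_closed_under_directSums_general [HasCoproducts.{u} A] [AB4OfSize.{u} A]
    (C : Set A) (hC : IsWideSubcategory C) (hC' : ClosedUnderDirectSums.{u} C) :
    (IsThickSubcategory (objectsWithHomologyIn C) ∧
      ClosedUnderDirectSums.{u} (objectsWithHomologyIn C)) ∧
    wideDirectSumClosure.{u} (homologyObjects (objectsWithHomologyIn C)) = C := by
  have hne : C.Nonempty := ⟨0, hC'.mem_of_isInitial (isZero_zero A).isInitial⟩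
  refine ⟨⟨hC.isThickSubcategory_objectsWithHomologyIn hne,
    closedUnderDirectSums_objectsWithHomologyIn hC'⟩, ?_⟩
  rw [hC.homologyObjects_objectsWithHomologyIn]
  exact (wideDirectSumClosure_subset hC hC' subset_rfl).antisymm (subset_wideDirectSumClosure C)

end Homology

/-- Lemma 5.1: for any ring `R` and any wide subcategory `C` of
`R`-modules closed under arbitrary direct sums, `f(C)` is a localizing subcategory
(a thick subcategory closed under arbitrary direct sums) of `D(R)`, and
`g(f(C)) = C`. -/
theorem gf_eq_self_of_closed_under_directSums (R : Type u) [Ring R]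
    [HasDerivedCategory.{w} (ModuleCat.{u} R)]
    (C : Set (ModuleCat.{u} R)) (hC : IsWideSubcategory C)
    (hC' : ClosedUnderDirectSums.{u} C) :
    (IsThickSubcategory (fBig C) ∧ ClosedUnderDirectSums.{u} (fBig C)) ∧
    gBig (fBig C) = C :=
  gf_eq_self_of_closed_under_directSums_general C hC hC'
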